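/- Let d ∈ ℕ, let U ∈ GL_d(ℤ) be a unipotent matrix, let X ≤ 𝕋^d be an infinite closed subgroup of the torus 𝕋^d = ℝ^d/ℤ^d, and let x ∈ X. Then there exist c ∈ ℕ and a sequence (x_n)_{n=1}^∞ of points of X such that U^{cn} x_n = x_n for every n ∈ ℕ and x_n → x as n → ∞. -/

import Mathlib

open MeasureTheory Topology Filter

/-- The `d`-dimensional torus `ℝ^d/ℤ^d`. -/
abbrev Torus (d : ℕ) := Fin d → AddCircle (1 : ℝ)

/-- The automorphism of the torus induced by an integer matrix. -/
noncomputable def toralAuto {d : ℕ} (U : Matrix (Fin d) (Fin d) ℤ) : Torus d → Torus d :=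
  fun x i => ∑ j, U i j • x j

section helpers

lemma tp_discrete {E : Type*} [NormedAddCommGroup E] [NormedSpace ℝ E] [FiniteDimensional ℝ E]
    (H : AddSubgroup E) (hH : IsClosed (H : Set E)) (W : Submodule ℝ E)
    (hW : ∀ w ∈ W, (∀ t : ℝ, t • w ∈ H) → w = 0) :
    ∃ δ : ℝ, 0 < δ ∧ ∀ h ∈ H, h ∈ W → ‖h‖ < δ → h = 0 := by
  by_contra hcon
  push Not at hcon
  have : ∀ n : ℕ, ∃ h ∈ H, h ∈ W ∧ ‖h‖ < 1 / ((n : ℝ) + 1) ∧ h ≠ 0 := fun n =>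
    hcon _ Nat.one_div_pos_of_nat
  choose h hhH hhW hhn hh0 using this
  have : ProperSpace E := FiniteDimensional.proper ℝ E
  have hpos : ∀ n, 0 < ‖h n‖ := fun n => norm_pos_iff.2 (hh0 n)
  have hlim : Tendsto (fun n => ‖h n‖) atTop (𝓝 0) :=
    squeeze_zero (fun n => norm_nonneg _) (fun n => (hhn n).le)
      tendsto_one_div_add_atTop_nhds_zero_nat
  obtain ⟨u, hu, φ, hφ, hlimu⟩ := (isCompact_sphere (0 : E) 1).tendsto_subseq
    (x := fun n => ‖h n‖⁻¹ • h n) (fun n => by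
      simp [norm_smul, (hpos n).ne'])
  have huW : u ∈ W := by
    have hc : IsClosed (W : Set E) := W.closed_of_finiteDimensional
    exact hc.mem_of_tendsto hlimu (Eventually.of_forall fun n => W.smul_mem _ (hhW _))
  have hu0 : u = 0 := by
    apply hW u huW
    intro t
    have hlim' := hlim.comp hφ.tendsto_atTop
    have hdiff : Tendsto (fun n => ⌊t / ‖h (φ n)‖⌋ • h (φ n) - t • (‖h (φ n)‖⁻¹ • h (φ n)))
        atTop (𝓝 0) := by
      apply squeeze_zero_norm _ hlim'
      intro n
      have : ⌊t / ‖h (φ n)‖⌋ • h (φ n) - t • (‖h (φ n)‖⁻¹ • h (φ n))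
          = ((⌊t / ‖h (φ n)‖⌋ : ℝ) - t / ‖h (φ n)‖) • h (φ n) := by
        rw [sub_smul, ← Int.cast_smul_eq_zsmul ℝ, smul_smul, div_eq_mul_inv]
      rw [this, norm_smul]
      have h1 : ‖(⌊t / ‖h (φ n)‖⌋ : ℝ) - t / ‖h (φ n)‖‖ ≤ 1 := by
        rw [Real.norm_eq_abs, abs_le]
        constructor
        · linarith [Int.lt_floor_add_one (t / ‖h (φ n)‖)]
        · linarith [Int.floor_le (t / ‖h (φ n)‖)]
      calc _ ≤ 1 * ‖h (φ n)‖ := by gcongr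
        _ = _ := by simp
    have hl : Tendsto (fun n => ⌊t / ‖h (φ n)‖⌋ • h (φ n)) atTop (𝓝 (t • u)) := by
      have := hdiff.add (hlimu.const_smul t)
      simpa using this
    exact hH.mem_of_tendsto hl (Eventually.of_forall fun n => H.zsmul_mem (hhH _) _)
  simp [hu0] at hu

/-- The largest linear subspace in a subgroup. -/
def tpSub {E : Type*} [NormedAddCommGroup E] [NormedSpace ℝ E] (H : AddSubgroup E) :
    Submodule ℝ E where
  carrier := {v | ∀ t : ℝ, t • v ∈ H}
  add_mem' := fun {a b} ha hb t => by rw [smul_add]; exact H.add_mem (ha t) (hb t)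
  zero_mem' := fun t => by rw [smul_zero]; exact H.zero_mem
  smul_mem' := fun c v hv t => by rw [smul_smul]; exact hv _

lemma tp_local {E : Type*} [NormedAddCommGroup E] [NormedSpace ℝ E] [FiniteDimensional ℝ E]
    (H : AddSubgroup E) (hH : IsClosed (H : Set E)) :
    ∃ ε : ℝ, 0 < ε ∧ ∀ h ∈ H, ‖h‖ < ε → h ∈ tpSub H := by
  obtain ⟨W, hVW⟩ := (tpSub H).exists_isCompl
  obtain ⟨δ, hδ, hd⟩ := tp_discrete H hH W (fun w hw ht =>
    (Submodule.disjoint_def.1 hVW.disjoint) w ht hw)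
  let P := W.projection _ hVW.symm
  have hPc : Continuous P := LinearMap.continuous_of_finiteDimensional P
  obtain ⟨ε, hε, hP⟩ := Metric.continuousAt_iff.1 (hPc.continuousAt (x := (0 : E))) δ hδ
  refine ⟨ε, hε, fun h hh hn => ?_⟩
  have h1 := hP (x := h) (by simpa using hn)
  have h2 : h - P h ∈ tpSub H := by
    have : P (h - P h) = 0 := by
      rw [map_sub, Submodule.projection_apply_of_mem_left hVW.symm
        (Submodule.projection_apply_mem hVW.symm h), sub_self]
    have h3 : W.projectionOnto _ hVW.symm (h - P h) = 0 := Subtype.ext this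
    exact (Submodule.projectionOnto_apply_eq_zero_iff hVW.symm).1 h3
  have h3 : P h ∈ H := by
    have : h - P h ∈ H := by simpa using h2 1
    simpa using H.sub_mem hh this
  have h4 : P h = 0 := hd _ h3 (Submodule.projection_apply_mem _ _) (by simpa using h1)
  simpa [h4] using h2

/-- The projection to the torus. -/
noncomputable def tpProj (d : ℕ) : (Fin d → ℝ) →+ Torus d where
  toFun := Pi.map fun _ t => (t : AddCircle (1 : ℝ))
  map_zero' := by ext; simp
  map_add' := by intros; ext; simp

lemma tpProj_cont (d : ℕ) : Continuous (tpProj d) :=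
  Continuous.piMap fun _ => AddCircle.continuous_mk' 1

lemma tpProj_open (d : ℕ) : IsOpenMap (tpProj d) :=
  IsOpenMap.piMap (fun _ => QuotientAddGroup.isOpenMap_coe) (by simp)

lemma tp_main {d : ℕ} (X : AddSubgroup (Torus d)) (hX : IsClosed (X : Set (Torus d)))
    (x : Torus d) (hx : x ∈ X) :
    ∃ e : ℕ, 0 < e ∧ ∃ R : ℝ, ∀ n : ℕ, ∃ v : Fin d → ℝ, ‖v‖ ≤ R ∧
      (∀ t : ℝ, tpProj d (t • v) ∈ X) ∧ tpProj d v = (e * n) • x := by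
  let H : AddSubgroup (Fin d → ℝ) := X.comap (tpProj d)
  have hH : IsClosed (H : Set (Fin d → ℝ)) := hX.preimage (tpProj_cont d)
  obtain ⟨ε, hε, hloc⟩ := tp_local H hH
  let B : Set (Torus d) := tpProj d '' Metric.ball 0 ε
  have hB : B ∈ 𝓝 (0 : Torus d) :=
    (tpProj_open d _ Metric.isOpen_ball).mem_nhds ⟨0, by simpa using hε, map_zero _⟩
  obtain ⟨s, hsX, hs⟩ := hX.isCompact.elim_nhds_subcover (fun y => {z | z - y ∈ B})
    (fun y _ => by
      have : Tendsto (fun z => z - y) (𝓝 y) (𝓝 0) := by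
        have h : Continuous (fun z : Torus d => z - y) := by fun_prop
        simpa using h.tendsto y
      exact this hB)
  have key : ∀ y ∈ X, ∃ z ∈ s, ∃ v ∈ tpSub H, ‖v‖ < ε ∧ y = z + tpProj d v := by
    intro y hy
    have := hs hy
    simp only [Set.mem_iUnion] at this
    obtain ⟨z, hz, v, hv, hvz⟩ := this
    have hvn : ‖v‖ < ε := by simpa using hv
    refine ⟨z, hz, v, hloc v ?_ hvn, hvn, by rw [hvz]; abel⟩
    change tpProj d v ∈ X
    rw [hvz]
    exact X.sub_mem hy (hsX z hz)
  -- pigeonhole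
  have hmul : ∀ m : ℕ, ∃ z : s, ∃ v ∈ tpSub H, m • x = z + tpProj d v := by
    intro m
    obtain ⟨z, hz, v, hv, -, h⟩ := key (m • x) (X.nsmul_mem hx m)
    exact ⟨⟨z, hz⟩, v, hv, h⟩
  choose f g hg hfg using hmul
  obtain ⟨a, b, hab, hf⟩ : ∃ a b : ℕ, a < b ∧ f a = f b := by
    obtain ⟨a, b, hne, hf⟩ := Finite.exists_ne_map_eq_of_infinite f
    rcases lt_or_gt_of_ne hne with h | h
    · exact ⟨a, b, h, hf⟩
    · exact ⟨b, a, h, hf.symm⟩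
  have hex : (b - a) • x = tpProj d (g b - g a) := by
    have h1 : (b - a) • x + a • x = b • x := by rw [← add_smul]; congr 1; omega
    rw [hfg a, hfg b, hf] at h1
    rw [map_sub]
    have h2 := eq_sub_of_add_eq h1
    rw [h2]; abel
  have hgV : g b - g a ∈ tpSub H := (tpSub H).sub_mem (hg b) (hg a)
  have hw : ∀ z : Torus d, ∃ w : Fin d → ℝ, w ∈ tpSub H ∧
      ((∃ w' ∈ tpSub H, tpProj d w' = z) → tpProj d w = z) := by
    intro z
    by_cases h : ∃ w' ∈ tpSub H, tpProj d w' = z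
    · obtain ⟨w', h1, h2⟩ := h
      exact ⟨w', h1, fun _ => h2⟩
    · exact ⟨0, (tpSub H).zero_mem, fun h' => absurd h' h⟩
  choose w hwV hw using hw
  refine ⟨b - a, by omega, ∑ z ∈ s, ‖w z‖ + ε, fun n => ?_⟩
  obtain ⟨z, hz, v, hv, hvn, h⟩ := key (((b - a) * n) • x) (X.nsmul_mem hx _)
  have h1 : tpProj d (w z) = z := by
    apply hw z
    refine ⟨n • (g b - g a) - v, (tpSub H).sub_mem ((tpSub H).nsmul_mem hgV n) hv, ?_⟩
    rw [map_sub, map_nsmul, ← hex, ← mul_smul, mul_comm n, h]; abel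
  refine ⟨w z + v, ?_, (tpSub H).add_mem (hwV z) hv, ?_⟩
  · calc ‖w z + v‖ ≤ ‖w z‖ + ‖v‖ := norm_add_le _ _
      _ ≤ _ := add_le_add (Finset.single_le_sum (f := fun z => ‖w z‖)
        (fun _ _ => norm_nonneg _) hz) hvn.le
  · rw [map_add, h1, h]

open scoped Matrix.Module in
lemma tp_iter {d : ℕ} (U : Matrix (Fin d) (Fin d) ℤ) (m : ℕ) (y : Torus d) :
    (toralAuto U)^[m] y = U ^ m • y := by
  induction m with
  | zero => simp
  | succ m ih => rw [Function.iterate_succ_apply', ih, pow_succ', mul_smul]; rfl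

lemma tp_dvd (d k i : ℕ) (hi : 0 < i) (hid : i ≤ d) : k ∣ (d.factorial * k).choose i := by
  obtain ⟨q, hq⟩ := Nat.dvd_factorial hi hid
  rcases Nat.eq_zero_or_pos k with rfl | hk
  · simp [Nat.choose_eq_zero_of_lt hi]
  obtain ⟨j, rfl⟩ := Nat.exists_eq_succ_of_ne_zero hi.ne'
  obtain ⟨m, hm⟩ := Nat.exists_eq_succ_of_ne_zero
    (Nat.mul_pos d.factorial_pos hk).ne'
  have h := Nat.add_one_mul_choose_eq m j
  rw [← Nat.succ_eq_add_one, ← hm, ← Nat.succ_eq_add_one] at h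
  refine ⟨q * m.choose j, ?_⟩
  apply Nat.eq_of_mul_eq_mul_right hi
  rw [← h, hq]; ring

open scoped Matrix.Module in
lemma tp_period {d : ℕ} (U : Matrix (Fin d) (Fin d) ℤ) (hU : (U - 1) ^ d = 0) (k : ℕ)
    (y : Torus d) (hy : k • y = 0) : (toralAuto U)^[d.factorial * k] y = y := by
  rw [tp_iter]
  have h := (Commute.one_right (U - 1)).add_pow (d.factorial * k)
  rw [sub_add_cancel] at h
  rw [h, Finset.sum_smul, Finset.sum_eq_single 0]
  · simp
  · intro i _ hi
    by_cases hid : i ≤ d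
    · obtain ⟨q, hq⟩ := tp_dvd d k i (Nat.pos_of_ne_zero hi) hid
      rw [hq, one_pow, mul_one, mul_comm k q, Nat.cast_mul, mul_smul, mul_smul,
        Nat.cast_smul_eq_nsmul _ k, hy, smul_zero, smul_zero]
    · rw [pow_eq_zero_of_le (by omega) hU]; simp
  · simp

end helpers

/-- Given a unipotent toral automorphism `U`, an infinite closed subgroup `X ≤ 𝕋^d` and a
point `x ∈ X`, there are `c ∈ ℕ` and points `xₙ ∈ X` of period `c·n` converging to `x`. -/
theorem exists_periodic_points_in_subgroup_converging
    {d : ℕ} (hd : 0 < d) (U : Matrix (Fin d) (Fin d) ℤ)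
    (hUdet : IsUnit U.det) (hUuni : (U - 1) ^ d = 0)
    (X : AddSubgroup (Torus d)) (hXclosed : IsClosed (X : Set (Torus d)))
    (hXinf : (X : Set (Torus d)).Infinite)
    (x : Torus d) (hx : x ∈ X) :
    ∃ c : ℕ, 0 < c ∧ ∃ xs : ℕ → Torus d,
      (∀ n : ℕ, 0 < n → xs n ∈ X ∧ (toralAuto U)^[c * n] (xs n) = xs n) ∧
      Tendsto xs atTop (nhds x) := by
  obtain ⟨e, he, R, hR⟩ := tp_main X hXclosed x hx
  choose v hvR hvX hv using hR
  refine ⟨d.factorial * e, Nat.mul_pos d.factorial_pos he,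
    fun n => x - tpProj d (((e * n : ℕ) : ℝ)⁻¹ • v n), fun n hn => ⟨X.sub_mem hx (hvX n _), ?_⟩, ?_⟩
  · rw [mul_assoc]
    apply tp_period U hUuni
    have h0 : ((e * n : ℕ) : ℝ) ≠ 0 := Nat.cast_ne_zero.2 (Nat.mul_pos he hn).ne'
    rw [smul_sub, ← map_nsmul, ← Nat.cast_smul_eq_nsmul ℝ (e * n) (_ • v n), smul_smul,
      mul_inv_cancel₀ h0, one_smul, hv, sub_self]
  · have h1 : Tendsto (fun n : ℕ => ((e * n : ℕ) : ℝ)⁻¹ * R) atTop (𝓝 0) := by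
      have h2 : Tendsto (fun n : ℕ => e * n) atTop atTop :=
        tendsto_id.const_mul_atTop' he
      have h3 := (tendsto_inv_atTop_zero.comp (tendsto_natCast_atTop_atTop (R := ℝ))).comp h2
      simpa using h3.mul_const R
    have h4 : Tendsto (fun n : ℕ => ((e * n : ℕ) : ℝ)⁻¹ • v n) atTop (𝓝 0) := by
      apply squeeze_zero_norm _ h1
      intro n
      rw [norm_smul, norm_inv, Real.norm_natCast]
      exact mul_le_mul_of_nonneg_left (hvR n) (by positivity)
    have h5 := ((tpProj_cont d).tendsto 0).comp h4
    rw [map_zero] at h5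
    simpa using h5.const_sub x
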